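/- Let W and S both lie in the orthogonal symplectic group OSp(2N,ℝ) = Sp(2N,ℝ) ∩ O(2N). Then Tr(WᵀS·J·Y) = 0 for every real 2N×2N matrix Y satisfying Yᵀ = Y and JY = YJ (i.e., for every tangent direction JY in the Lie algebra of OSp(2N,ℝ)) if and only if WᵀS is symmetric, i.e., WᵀS = SᵀW. -/

import Mathlib

open Matrix

/-- `J` denotes the 2N×2N real matrix with block form [[0, I_N], [−I_N, 0]]. -/
noncomputable def J (N : ℕ) : Matrix (Fin N ⊕ Fin N) (Fin N ⊕ Fin N) ℝ :=
  Matrix.fromBlocks 0 1 (-1) 0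

/-!
The tangent directions `J * Y`, with `Y` symmetric and commuting with `J`, are exactly the
skew-symmetric matrices commuting with `J`. On a skew-symmetric `K` the functional
`K ↦ tr (A * K)` sees only the skew part of `A`, since `tr ((A - Aᵀ) * K) = 2 tr (A * K)`.
If `A` commutes with `J`, then `A - Aᵀ` is itself a tangent direction, so pairing `A` with it
gives a multiple of `tr ((A - Aᵀ)ᵀ * (A - Aᵀ))`, which vanishes only if `A = Aᵀ`. This applies to
`A = Wᵀ * S` because orthogonal symplectic matrices commute with `J`.
-/

theorem isSymm_transpose_mul_iff {m n R : Type*} [Fintype m] [CommSemiring R]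
    {W S : Matrix m n R} :
    (Wᵀ * S).IsSymm ↔ Wᵀ * S = Sᵀ * W := by
  rw [IsSymm, transpose_mul, transpose_transpose, eq_comm]

section CommRing

variable {n R : Type*} [Fintype n] [CommRing R] {A K M S W Ω : Matrix n n R}

theorem trace_sub_transpose_mul_of_skew (hK : Kᵀ = -K) (A : Matrix n n R) :
    ((A - Aᵀ) * K).trace = 2 * (A * K).trace := by
  have transpose_pairing : (Aᵀ * K).trace = -(A * K).trace := by
    calc (Aᵀ * K).trace = (Kᵀ * A).trace := by
          rw [← trace_transpose, transpose_mul, transpose_transpose]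
      _ = -(A * K).trace := by rw [hK, neg_mul, trace_neg, trace_mul_comm]
  rw [sub_mul, trace_sub, transpose_pairing]
  ring

theorem commute_transpose_of_skew (hΩ : Ωᵀ = -Ω) (hA : Commute Ω A) : Commute Ω Aᵀ := by
  have h := congrArg transpose hA.eq
  rw [transpose_mul, transpose_mul, hΩ, mul_neg, neg_mul, neg_inj] at h
  exact h.symm

variable [DecidableEq n]

theorem commute_of_orthogonal_of_symplectic (horth : Mᵀ * M = 1)
    (hsymp : Mᵀ * Ω * M = Ω) : Commute Ω M := by
  calc Ω * M = M * Mᵀ * Ω * M := by rw [mul_eq_one_comm.mp horth, one_mul]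
    _ = M * (Mᵀ * Ω * M) := by simp only [mul_assoc]
    _ = M * Ω := by rw [hsymp]

theorem commute_transpose_mul_of_orthogonal_of_symplectic (hΩ : Ωᵀ = -Ω)
    (hWorth : Wᵀ * W = 1) (hWsymp : Wᵀ * Ω * W = Ω)
    (hSorth : Sᵀ * S = 1) (hSsymp : Sᵀ * Ω * S = Ω) : Commute Ω (Wᵀ * S) :=
  (commute_transpose_of_skew hΩ (commute_of_orthogonal_of_symplectic hWorth hWsymp)).mul_right
    (commute_of_orthogonal_of_symplectic hSorth hSsymp)

theorem exists_isSymm_commute_mul_eq_iff (hΩ : Ωᵀ = -Ω) (hΩΩ : Ω * Ω = -1) :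
    (∃ Y : Matrix n n R, Y.IsSymm ∧ Commute Ω Y ∧ Ω * Y = K) ↔ Kᵀ = -K ∧ Commute Ω K := by
  constructor
  · rintro ⟨Y, hY, hΩY, rfl⟩
    refine ⟨?_, (Commute.refl Ω).mul_right hΩY⟩
    rw [transpose_mul, hY.eq, hΩ, mul_neg, hΩY.eq]
  · rintro ⟨hK, hΩK⟩
    refine ⟨-(Ω * K), ?_, ((Commute.refl Ω).mul_right hΩK).neg_right, ?_⟩
    · rw [IsSymm, transpose_neg, transpose_mul, hK, hΩ, neg_mul_neg, hΩK.eq]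
    · rw [mul_neg, ← mul_assoc, hΩΩ, neg_one_mul, neg_neg]

end CommRing

section LinearOrder

theorem trace_transpose_mul_self_eq_zero_iff {m n R : Type*} [Fintype m] [Fintype n] [Ring R]
    [LinearOrder R] [IsStrictOrderedRing R] {A : Matrix m n R} : (Aᵀ * A).trace = 0 ↔ A = 0 := by
  have diag_nonneg (i : n) : 0 ≤ Aᵀ i ⬝ᵥ Aᵀ i :=
    Finset.sum_nonneg fun j _ => mul_self_nonneg (A j i)
  calc (Aᵀ * A).trace = 0 ↔ ∑ i, Aᵀ i ⬝ᵥ Aᵀ i = 0 := Iff.rfl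
    _ ↔ ∀ i, Aᵀ i ⬝ᵥ Aᵀ i = 0 := by
      simp only [Finset.sum_eq_zero_iff_of_nonneg fun i _ => diag_nonneg i, Finset.mem_univ,
        true_imp_iff]
    _ ↔ ∀ i, Aᵀ i = 0 := forall_congr' fun _ => dotProduct_self_eq_zero
    _ ↔ A = 0 := funext_iff.symm.trans transpose_eq_zero

variable {n R : Type*} [Fintype n] [CommRing R] [LinearOrder R] [IsStrictOrderedRing R]
  {A Ω : Matrix n n R}

theorem forall_skew_commute_trace_mul_eq_zero_iff (hΩ : Ωᵀ = -Ω) (hA : Commute Ω A) :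
    (∀ K : Matrix n n R, Kᵀ = -K → Commute Ω K → (A * K).trace = 0) ↔ A.IsSymm := by
  constructor
  · intro h
    have skew : (A - Aᵀ)ᵀ = -(A - Aᵀ) := by
      rw [transpose_sub, transpose_transpose, neg_sub]
    have pairing : (A * (A - Aᵀ)).trace = 0 :=
      h _ skew (hA.sub_right (commute_transpose_of_skew hΩ hA))
    have norm_eq_zero : ((A - Aᵀ)ᵀ * (A - Aᵀ)).trace = 0 := by
      rw [skew, neg_mul, trace_neg, trace_sub_transpose_mul_of_skew skew, pairing, mul_zero,
        neg_zero]
    exact (sub_eq_zero.mp (trace_transpose_mul_self_eq_zero_iff.mp norm_eq_zero)).symm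
  · intro hSymm K hK _
    have h := trace_sub_transpose_mul_of_skew hK A
    rw [hSymm.eq, sub_self, zero_mul, trace_zero] at h
    linarith

theorem stmt_16_general [DecidableEq n] (hΩ : Ωᵀ = -Ω) (hΩΩ : Ω * Ω = -1) (hA : Commute Ω A) :
    (∀ Y : Matrix n n R, Y.IsSymm → Commute Ω Y → (A * Ω * Y).trace = 0) ↔ A.IsSymm := by
  rw [← forall_skew_commute_trace_mul_eq_zero_iff hΩ hA]
  constructor
  · intro h K hK hΩK
    obtain ⟨Y, hY, hΩY, rfl⟩ := (exists_isSymm_commute_mul_eq_iff hΩ hΩΩ).mpr ⟨hK, hΩK⟩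
    rw [← mul_assoc]
    exact h Y hY hΩY
  · intro h Y hY hΩY
    obtain ⟨hK, hΩK⟩ := (exists_isSymm_commute_mul_eq_iff hΩ hΩΩ).mp ⟨Y, hY, hΩY, rfl⟩
    rw [mul_assoc]
    exact h (Ω * Y) hK hΩK

end LinearOrder

theorem J_eq_neg_matrix_J (N : ℕ) : _root_.J N = -Matrix.J (Fin N) ℝ := by
  rw [_root_.J, Matrix.J, fromBlocks_neg, neg_zero, neg_neg]

theorem transpose_J (N : ℕ) : (_root_.J N)ᵀ = -_root_.J N := by
  rw [J_eq_neg_matrix_J, transpose_neg, J_transpose]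

theorem J_mul_self (N : ℕ) : _root_.J N * _root_.J N = -1 := by
  rw [J_eq_neg_matrix_J, neg_mul_neg, J_squared]

/-- For `W`, `S` in the orthogonal symplectic group, `Tr(WᵀS·J·Y) = 0` for every `Y`
with `Yᵀ = Y` and `JY = YJ` (i.e., along every tangent direction of `OSp(2N,ℝ)`) iff
`WᵀS` is symmetric, i.e., `WᵀS = SᵀW`. -/
theorem stmt_16 (N : ℕ) (W S : Matrix (Fin N ⊕ Fin N) (Fin N ⊕ Fin N) ℝ)
    (hWsymp : Wᵀ * J N * W = J N) (hWorth : Wᵀ * W = 1)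
    (hSsymp : Sᵀ * J N * S = J N) (hSorth : Sᵀ * S = 1) :
    (∀ Y : Matrix (Fin N ⊕ Fin N) (Fin N ⊕ Fin N) ℝ, Yᵀ = Y → J N * Y = Y * J N →
        (Wᵀ * S * J N * Y).trace = 0) ↔
      Wᵀ * S = Sᵀ * W := by
  have hA : Commute (J N) (Wᵀ * S) := commute_transpose_mul_of_orthogonal_of_symplectic
    (transpose_J N) hWorth hWsymp hSorth hSsymp
  exact (stmt_16_general (transpose_J N) (J_mul_self N) hA).trans isSymm_transpose_mul_iff
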